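/- For all real numbers α, δ and every i ∈ {1,2,3}: Σ_{s=1}^7 γ(e_s)[(α/2)γ(e_s)ψ_i + ((α−δ)/2) Σ_{p=1}^3 η_p(e_s)(Φ_p·ψ_i)] = −((2α+5δ)/2) ψ_i. (Equivalently, each auxiliary spinor, viewed as an 𝓗-Killing spinor in dimension 7, is an eigenspinor of the Riemannian Dirac operator with eigenvalue −(2α+5δ)/2.) -/

import Mathlib

noncomputable section

/- Context: the spin representation in dimension 7, realized on
`Σ = Λ^•(ℂ³)`, modelled as `Finset (Fin 3) → ℂ` (coefficients with respect to
the orthonormal basis of monomials `y_{i₁} ∧ ⋯ ∧ y_{i_k}`, `i₁ < ⋯ < i_k`).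
`cOp j` is wedging with `y_j`, `aOp j` is its adjoint, and `γ` is the Clifford
multiplication of `ℝ⁷` determined by
`γ(e₁) = i` on even-degree and `-i` on odd-degree elements,
`γ(e_{2j}) = i(a_j + c_j)`, `γ(e_{2j+1}) = c_j - a_j`.
Indices of `e₁,…,e₇` (resp. `y₁,y₂,y₃`) are shifted to `Fin 7` (resp. `Fin 3`),
so `e_s` is `estd (s-1)` and `y_j` corresponds to `j-1 : Fin 3`. -/

open Complex

/-- The spinor module `Σ = Λ^•(ℂ³)`, as coefficient functions on the monomial
basis indexed by subsets of `{1,2,3}`. -/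
abbrev SpinorRep := Finset (Fin 3) → ℂ

/-- The sign `(-1)^{#{i ∈ S | i < j}}` arising when wedging `y_j` into the
monomial indexed by `S`. -/
def csign (j : Fin 3) (S : Finset (Fin 3)) : ℂ := (-1 : ℂ) ^ (S.filter (· < j)).card

/-- Creation operator `c_j`: wedge product with `y_j`. -/
def cOp (j : Fin 3) : SpinorRep →ₗ[ℂ] SpinorRep where
  toFun ψ := fun S => if j ∈ S then csign j S * ψ (S.erase j) else 0
  map_add' ψ χ := by
    funext S
    by_cases h : j ∈ S <;> simp [h, mul_add]
  map_smul' c ψ := by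
    funext S
    by_cases h : j ∈ S <;> simp [h] <;> ring

/-- Annihilation operator `a_j = c_j^*`: the adjoint of `c_j` with respect to
the Hermitian inner product making the monomials orthonormal. -/
def aOp (j : Fin 3) : SpinorRep →ₗ[ℂ] SpinorRep where
  toFun ψ := fun S => if j ∈ S then 0 else csign j S * ψ (insert j S)
  map_add' ψ χ := by
    funext S
    by_cases h : j ∈ S <;> simp [h, mul_add]
  map_smul' c ψ := by
    funext S
    by_cases h : j ∈ S <;> simp [h] <;> ring

/-- `γ(e₁)`: multiplication by `i` on even-degree and by `-i` on odd-degree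
elements. -/
def parityOp : SpinorRep →ₗ[ℂ] SpinorRep where
  toFun ψ := fun S => (if Even S.card then I else -I) * ψ S
  map_add' ψ χ := by funext S; simp [mul_add]
  map_smul' c ψ := by funext S; simp; ring

/-- Clifford multiplication by the standard basis vectors `e₁,…,e₇` of `ℝ⁷`. -/
def gammaBasis : Fin 7 → (SpinorRep →ₗ[ℂ] SpinorRep)
  | 0 => parityOp
  | 1 => I • (aOp 0 + cOp 0)
  | 2 => cOp 0 - aOp 0
  | 3 => I • (aOp 1 + cOp 1)
  | 4 => cOp 1 - aOp 1
  | 5 => I • (aOp 2 + cOp 2)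
  | 6 => cOp 2 - aOp 2

/-- Clifford multiplication `γ(v)` for `v ∈ ℝ⁷`. -/
def gamma (v : Fin 7 → ℝ) : SpinorRep →ₗ[ℂ] SpinorRep :=
  ∑ s : Fin 7, (v s : ℂ) • gammaBasis s

/-- The index in `Fin 7` of the Reeb direction `ξ_i = e_i`, `i = 1,2,3`. -/
def xiIdx (i : Fin 3) : Fin 7 := ⟨i.val, by omega⟩

/-- The action of the fundamental 2-forms
`Φ₁ = -e^{23} - e^{45} - e^{67}`, `Φ₂ = e^{13} - e^{46} + e^{57}`,
`Φ₃ = -e^{12} - e^{47} - e^{56}` on spinors, via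
`τ·ψ = Σ_{p<q} τ_{pq} γ(e_p)γ(e_q)ψ`. -/
def PhiOp : Fin 3 → (SpinorRep →ₗ[ℂ] SpinorRep)
  | 0 => -(gammaBasis 1 ∘ₗ gammaBasis 2) - gammaBasis 3 ∘ₗ gammaBasis 4
         - gammaBasis 5 ∘ₗ gammaBasis 6
  | 1 => gammaBasis 0 ∘ₗ gammaBasis 2 - gammaBasis 3 ∘ₗ gammaBasis 5
         + gammaBasis 4 ∘ₗ gammaBasis 6
  | 2 => -(gammaBasis 0 ∘ₗ gammaBasis 1) - gammaBasis 3 ∘ₗ gammaBasis 6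
         - gammaBasis 4 ∘ₗ gammaBasis 5

/-- The canonical spinor `ψ₀ = (y₂ ∧ y₃ + i y₁)/√2`. -/
def psi0 : SpinorRep := fun S =>
  if S = ({1, 2} : Finset (Fin 3)) then (Real.sqrt 2 : ℂ)⁻¹
  else if S = ({0} : Finset (Fin 3)) then I * (Real.sqrt 2 : ℂ)⁻¹
  else 0

/-- The auxiliary spinors `ψ_i = ξ_i · ψ₀`, `i = 1,2,3`. -/
def psiAux (i : Fin 3) : SpinorRep := gammaBasis (xiIdx i) psi0

/-! Since `γ(e_s)² = -1`, the first summands contribute `-7α/2`, and what remains is to compute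
`B = ∑ₚ γ(ξ_p) Φ_p` on `ψ_i`. Expanding, `B` is a combination of Clifford products `γ_a γ_b γ_c` of
distinct basis vectors, with `γ₁γ₂γ₃` occurring three times and each of
`γ₁γ₄γ₅, γ₁γ₆γ₇, γ₂γ₄γ₆, γ₂γ₅γ₇, γ₃γ₄γ₇, γ₃γ₅γ₆` once, up to sign. All seven have `ψ₀` as an
eigenvector with eigenvalue `±1`, and `γ_i` commutes with those containing the index `i` and
anticommutes with the others. Hence `ψ_i = γ_i ψ₀` is an eigenvector too: `γ₁γ₂γ₃` contributes `3`,
the two other products containing `i` contribute `-1` each and the remaining four `+1` each, so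
`B ψ_i = 5 ψ_i` and the eigenvalue is `-7α/2 + 5(α - δ)/2`. -/

theorem csign_mul_self (j : Fin 3) (S : Finset (Fin 3)) : csign j S * csign j S = 1 := by
  rw [csign, ← mul_pow, neg_one_mul, neg_neg, one_pow]

theorem csign_insert_of_lt {j k : Fin 3} {S : Finset (Fin 3)} (hkj : k < j) (hk : k ∉ S) :
    csign j (insert k S) = -csign j S := by
  simp [csign, Finset.filter_insert, hkj, hk, pow_succ]

theorem csign_insert_of_le {j k : Fin 3} (S : Finset (Fin 3)) (hjk : j ≤ k) :
    csign j (insert k S) = csign j S := by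
  simp [csign, Finset.filter_insert, hjk.not_gt]

theorem csign_erase_of_lt {j k : Fin 3} {S : Finset (Fin 3)} (hkj : k < j) (hk : k ∈ S) :
    csign j (S.erase k) = -csign j S := by
  rw [← neg_eq_iff_eq_neg, ← csign_insert_of_lt hkj (S.notMem_erase k), Finset.insert_erase hk]

theorem csign_erase_of_le {j k : Fin 3} (S : Finset (Fin 3)) (hjk : j ≤ k) :
    csign j (S.erase k) = csign j S := by
  by_cases hk : k ∈ S
  · rw [← csign_insert_of_le (S.erase k) hjk, Finset.insert_erase hk]
  · rw [Finset.erase_eq_of_notMem hk]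

section Anticommutator

variable (R : Type*) {A : Type*} [CommSemiring R] [Semiring A] [Algebra R A]

/-- The anticommutator `x * y + y * x` of an `R`-algebra as an `R`-bilinear map: the Clifford
relations then follow from the canonical anticommutation relations by bilinearity. -/
def anticommutator : A →ₗ[R] A →ₗ[R] A := LinearMap.mul R A + (LinearMap.mul R A).flip

theorem anticommutator_apply (x y : A) : anticommutator R x y = x * y + y * x := rfl

theorem anticommutator_comm (x y : A) : anticommutator R x y = anticommutator R y x :=
  add_comm _ _

end Anticommutator

theorem anticommutator_cOp_cOp (j k : Fin 3) : anticommutator ℂ (cOp j) (cOp k) = 0 := by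
  wlog hjk : j ≤ k generalizing j k
  · rw [anticommutator_comm, this k j (le_of_not_ge hjk)]
  ext1 ψ; ext S
  rcases hjk.eq_or_lt with rfl | hlt
  · simp [anticommutator_apply, cOp]
  · by_cases hj : j ∈ S <;> by_cases hk : k ∈ S <;>
      simp [anticommutator_apply, cOp, hj, hk, hlt.ne, hlt.ne', csign_erase_of_lt hlt,
        csign_erase_of_le S hjk, Finset.erase_right_comm (a := j), mul_left_comm (csign j S)]

theorem anticommutator_aOp_aOp (j k : Fin 3) : anticommutator ℂ (aOp j) (aOp k) = 0 := by
  wlog hjk : j ≤ k generalizing j k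
  · rw [anticommutator_comm, this k j (le_of_not_ge hjk)]
  ext1 ψ; ext S
  rcases hjk.eq_or_lt with rfl | hlt
  · simp [anticommutator_apply, aOp]
  · by_cases hj : j ∈ S <;> by_cases hk : k ∈ S <;>
      simp [anticommutator_apply, aOp, hj, hk, hlt.ne, hlt.ne', csign_insert_of_lt hlt,
        csign_insert_of_le S hjk, Finset.insert_comm j k, mul_left_comm (csign j S)]

theorem anticommutator_aOp_cOp_self (j : Fin 3) : anticommutator ℂ (aOp j) (cOp j) = 1 := by
  ext1 ψ; ext S
  by_cases hj : j ∈ S <;>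
    simp [anticommutator_apply, aOp, cOp, hj, csign_insert_of_le, csign_erase_of_le, ← mul_assoc,
      csign_mul_self]

theorem anticommutator_aOp_cOp_of_ne {j k : Fin 3} (hjk : j ≠ k) :
    anticommutator ℂ (aOp j) (cOp k) = 0 := by
  ext1 ψ; ext S
  by_cases hj : j ∈ S
  · simp [anticommutator_apply, aOp, cOp, hj, hjk]
  by_cases hk : k ∈ S
  · have hsign : csign j S * csign k (insert j S) = -(csign k S * csign j (S.erase k)) := by
      rcases hjk.lt_or_gt with h | h
      · rw [csign_insert_of_lt h hj, csign_erase_of_le S h.le, mul_neg, mul_comm]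
      · rw [csign_insert_of_le S h.le, csign_erase_of_lt h hk, mul_neg, neg_neg, mul_comm]
    simp [anticommutator_apply, aOp, cOp, hj, hk, ← mul_assoc, hsign,
      Finset.erase_insert_of_ne hjk]
  · simp [anticommutator_apply, aOp, cOp, hj, hk, hjk.symm]

theorem anticommutator_aOp_cOp (j k : Fin 3) :
    anticommutator ℂ (aOp j) (cOp k) = if j = k then 1 else 0 := by
  split_ifs with hjk
  · rw [hjk, anticommutator_aOp_cOp_self]
  · exact anticommutator_aOp_cOp_of_ne hjk

theorem anticommutator_cOp_aOp (j k : Fin 3) :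
    anticommutator ℂ (cOp j) (aOp k) = if j = k then 1 else 0 := by
  simp only [anticommutator_comm ℂ (cOp j), anticommutator_aOp_cOp, eq_comm]

theorem anticommutator_parityOp_self : anticommutator ℂ parityOp parityOp = -2 := by
  have hsq : parityOp * parityOp = -1 := by
    ext1 ψ; ext S
    by_cases hS : Even S.card <;> simp [parityOp, hS, ← mul_assoc]
  rw [anticommutator_apply, hsq, ← neg_add, one_add_one_eq_two]

theorem anticommutator_parityOp_cOp (j : Fin 3) : anticommutator ℂ parityOp (cOp j) = 0 := by
  ext1 ψ; ext S
  by_cases hj : j ∈ S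
  · obtain ⟨T, hjT, rfl⟩ : ∃ T, j ∉ T ∧ insert j T = S :=
      ⟨S.erase j, S.notMem_erase j, Finset.insert_erase hj⟩
    by_cases hT : Even T.card <;>
      simp [anticommutator_apply, parityOp, cOp, hjT, hT, Nat.even_add_one, mul_left_comm I]
  · simp [anticommutator_apply, parityOp, cOp, hj]

theorem anticommutator_parityOp_aOp (j : Fin 3) : anticommutator ℂ parityOp (aOp j) = 0 := by
  ext1 ψ; ext S
  by_cases hj : j ∈ S
  · simp [anticommutator_apply, parityOp, aOp, hj]
  · by_cases hS : Even S.card <;>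
      simp [anticommutator_apply, parityOp, aOp, hj, hS, Nat.even_add_one, mul_left_comm I]

theorem anticommutator_gammaBasis (s t : Fin 7) :
    anticommutator ℂ (gammaBasis s) (gammaBasis t) = if s = t then -2 else 0 := by
  fin_cases s <;> fin_cases t <;>
    simp +decide [gammaBasis, anticommutator_comm ℂ _ parityOp, anticommutator_cOp_cOp,
      anticommutator_aOp_aOp, anticommutator_aOp_cOp, anticommutator_cOp_aOp,
      anticommutator_parityOp_self, anticommutator_parityOp_cOp, anticommutator_parityOp_aOp,
      smul_smul] <;>
    norm_num

theorem gammaBasis_gammaBasis_self (s : Fin 7) (ψ : SpinorRep) :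
    gammaBasis s (gammaBasis s ψ) = -ψ := by
  have h := LinearMap.congr_fun (anticommutator_gammaBasis s s) ψ
  rw [anticommutator_apply, if_pos rfl] at h
  have h' : gammaBasis s (gammaBasis s ψ) + gammaBasis s (gammaBasis s ψ) = (-2 : ℂ) • ψ := by
    simpa [ofNat_smul_eq_nsmul] using h
  linear_combination (norm := module) (1 / 2 : ℂ) • h'

/-- The sign `ε` in `γ(e_s) γ(e_t) = ε γ(e_t) γ(e_s)`. -/
def commSign (s t : Fin 7) : ℂ := if s = t then 1 else -1

theorem gammaBasis_gammaBasis_comm (s t : Fin 7) (ψ : SpinorRep) :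
    gammaBasis s (gammaBasis t ψ) = commSign s t • gammaBasis t (gammaBasis s ψ) := by
  rcases eq_or_ne s t with rfl | hst
  · simp [commSign]
  · have h := LinearMap.congr_fun (anticommutator_gammaBasis s t) ψ
    rw [anticommutator_apply, if_neg hst] at h
    simpa [commSign, hst] using eq_neg_of_add_eq_zero_left h

/-- Clifford multiplication by the simple 3-vector `e_a ∧ e_b ∧ e_c`, when the indices are
distinct; they are the 0-based indices of `gammaBasis`. -/
def gammaTriple (a b c : Fin 7) : SpinorRep →ₗ[ℂ] SpinorRep :=
  gammaBasis a * gammaBasis b * gammaBasis c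

theorem gammaTriple_gammaBasis {a b c : Fin 7} {z : ℂ} {ψ : SpinorRep}
    (h : gammaTriple a b c ψ = z • ψ) (s : Fin 7) :
    gammaTriple a b c (gammaBasis s ψ) =
      (commSign a s * commSign b s * commSign c s * z) • gammaBasis s ψ := by
  calc gammaTriple a b c (gammaBasis s ψ)
      = (commSign a s * commSign b s * commSign c s) • gammaBasis s (gammaTriple a b c ψ) := by
        simp only [gammaTriple, Module.End.mul_apply, gammaBasis_gammaBasis_comm _ s, map_smul,
          smul_smul]
        ring_nf
    _ = _ := by rw [h, map_smul, smul_smul]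

/-- The monomial `y_{i₁} ∧ ⋯ ∧ y_{i_k}` with `S = {i₁ < ⋯ < i_k}`. -/
def monomial (S : Finset (Fin 3)) : SpinorRep := Pi.single S 1

theorem cOp_monomial (j : Fin 3) (S : Finset (Fin 3)) :
    cOp j (monomial S) = if j ∈ S then 0 else csign j S • monomial (insert j S) := by
  ext T
  by_cases hS : j ∈ S <;> by_cases hT : j ∈ T
  · have hne : T.erase j ≠ S := (ne_of_mem_of_not_mem' hS (T.notMem_erase j)).symm
    simp [cOp, monomial, hS, hT, hne]
  · simp [cOp, hS, hT]
  · rcases eq_or_ne T (insert j S) with rfl | hne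
    · simp [cOp, monomial, hS, csign_insert_of_le]
    · simp [cOp, monomial, hS, hT, Finset.erase_eq_iff_eq_insert, hne]
  · have hne : T ≠ insert j S := (ne_of_mem_of_not_mem' (S.mem_insert_self j) hT).symm
    simp [cOp, monomial, hS, hT, hne]

theorem aOp_monomial (j : Fin 3) (S : Finset (Fin 3)) :
    aOp j (monomial S) = if j ∈ S then csign j S • monomial (S.erase j) else 0 := by
  ext T
  by_cases hS : j ∈ S <;> by_cases hT : j ∈ T
  · have hne : T ≠ S.erase j := ne_of_mem_of_not_mem' hT (S.notMem_erase j)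
    simp [aOp, monomial, hS, hT, hne]
  · rcases eq_or_ne T (S.erase j) with rfl | hne
    · simp [aOp, monomial, hS, csign_erase_of_le]
    · have hne' : insert j T ≠ S := fun h => hne (by rw [← h, Finset.erase_insert hT])
      simp [aOp, monomial, hS, hT, hne, hne']
  · simp [aOp, hS, hT]
  · have hne : insert j T ≠ S := ne_of_mem_of_not_mem' (T.mem_insert_self j) hS
    simp [aOp, monomial, hS, hT, hne]

theorem parityOp_monomial (S : Finset (Fin 3)) :
    parityOp (monomial S) = (if Even S.card then I else -I) • monomial S := by
  ext T
  rcases eq_or_ne T S with rfl | h <;> simp_all [parityOp, monomial]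

theorem psi0_eq : psi0 = (Real.sqrt 2 : ℂ)⁻¹ • (monomial {1, 2} + I • monomial {0}) := by
  ext S
  by_cases h : S = {1, 2}
  · simp +decide [psi0, monomial, h]
  · simp [psi0, monomial, h, Pi.single_apply, mul_comm]

theorem I_smul_I_smul {E : Type*} [AddCommGroup E] [Module ℂ E] (x : E) : I • I • x = -x := by
  rw [smul_smul, I_mul_I, neg_one_smul]

theorem apply_psi0_eq_smul {T : SpinorRep →ₗ[ℂ] SpinorRep} {z : ℂ}
    (h : T (monomial {1, 2} + I • monomial {0}) = z • (monomial {1, 2} + I • monomial {0})) :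
    T psi0 = z • psi0 := by
  rw [psi0_eq, map_smul, h, smul_comm]

section

attribute [local simp] gammaTriple gammaBasis cOp_monomial aOp_monomial parityOp_monomial csign
  Finset.filter_insert Finset.filter_singleton Finset.erase_insert_of_ne I_smul_I_smul

theorem gammaTriple_012_psi0 : gammaTriple 0 1 2 psi0 = (-1 : ℂ) • psi0 :=
  apply_psi0_eq_smul (by simp +decide [add_comm])

theorem gammaTriple_034_psi0 : gammaTriple 0 3 4 psi0 = (1 : ℂ) • psi0 :=
  apply_psi0_eq_smul (by simp +decide [add_comm])

theorem gammaTriple_056_psi0 : gammaTriple 0 5 6 psi0 = (1 : ℂ) • psi0 :=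
  have hpair : monomial {2, 1} = monomial {1, 2} := congrArg monomial (Finset.pair_comm 2 1)
  apply_psi0_eq_smul (by simp +decide [add_comm, hpair])

theorem gammaTriple_135_psi0 : gammaTriple 1 3 5 psi0 = (1 : ℂ) • psi0 :=
  apply_psi0_eq_smul (by simp +decide [add_comm])

theorem gammaTriple_146_psi0 : gammaTriple 1 4 6 psi0 = (-1 : ℂ) • psi0 :=
  apply_psi0_eq_smul (by simp +decide [add_comm])

theorem gammaTriple_236_psi0 : gammaTriple 2 3 6 psi0 = (1 : ℂ) • psi0 :=
  apply_psi0_eq_smul (by simp +decide [add_comm])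

theorem gammaTriple_245_psi0 : gammaTriple 2 4 5 psi0 = (1 : ℂ) • psi0 :=
  apply_psi0_eq_smul (by simp +decide [add_comm])

end

theorem sum_gammaBasis_mul_PhiOp :
    ∑ p, gammaBasis (xiIdx p) * PhiOp p =
      (-3 : ℂ) • gammaTriple 0 1 2 - gammaTriple 0 3 4 - gammaTriple 0 5 6 - gammaTriple 1 3 5
        + gammaTriple 1 4 6 - gammaTriple 2 3 6 - gammaTriple 2 4 5 := by
  have h₁₀₂ (ψ : SpinorRep) : gammaBasis 1 (gammaBasis 0 (gammaBasis 2 ψ)) =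
      -gammaBasis 0 (gammaBasis 1 (gammaBasis 2 ψ)) := by
    simp [gammaBasis_gammaBasis_comm 1 0, commSign]
  have h₂₀₁ (ψ : SpinorRep) : gammaBasis 2 (gammaBasis 0 (gammaBasis 1 ψ)) =
      gammaBasis 0 (gammaBasis 1 (gammaBasis 2 ψ)) := by
    simp [gammaBasis_gammaBasis_comm 2, commSign]
  refine LinearMap.ext fun ψ => ?_
  simp only [xiIdx, PhiOp, Fin.isValue, Fin.sum_univ_three, Fin.coe_ofNat_eq_mod, Nat.zero_mod,
    Fin.zero_eta, Nat.one_mod, Fin.mk_one, Nat.mod_succ, Fin.reduceFinMk, LinearMap.add_apply,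
    Module.End.mul_apply, LinearMap.sub_apply, LinearMap.neg_apply, LinearMap.coe_comp,
    Function.comp_apply, map_sub, map_neg, map_add, h₁₀₂, h₂₀₁, gammaTriple, LinearMap.smul_apply]
  module

theorem sum_gammaBasis_PhiOp_psiAux (i : Fin 3) :
    ∑ p, gammaBasis (xiIdx p) (PhiOp p (psiAux i)) = (5 : ℂ) • psiAux i := by
  have h := LinearMap.congr_fun sum_gammaBasis_mul_PhiOp (psiAux i)
  simp only [LinearMap.sum_apply, Module.End.mul_apply] at h
  rw [h]
  simp only [psiAux, LinearMap.sub_apply, LinearMap.add_apply, LinearMap.smul_apply,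
    gammaTriple_gammaBasis gammaTriple_012_psi0,
    gammaTriple_gammaBasis gammaTriple_034_psi0, gammaTriple_gammaBasis gammaTriple_056_psi0,
    gammaTriple_gammaBasis gammaTriple_135_psi0, gammaTriple_gammaBasis gammaTriple_146_psi0,
    gammaTriple_gammaBasis gammaTriple_236_psi0, gammaTriple_gammaBasis gammaTriple_245_psi0]
  fin_cases i <;> simp [commSign, xiIdx] <;> module

theorem sum_gammaBasis_killing (x y : ℂ) (ψ : SpinorRep) :
    ∑ s, gammaBasis s (x • gammaBasis s ψ + y • ∑ p,
        ((if xiIdx p = s then (1 : ℝ) else 0 : ℝ) : ℂ) • PhiOp p ψ) =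
      (-7 * x) • ψ + y • ∑ p, gammaBasis (xiIdx p) (PhiOp p ψ) := by
  have hsq : ∑ s, gammaBasis s (gammaBasis s ψ) = (-7 : ℂ) • ψ := by
    simp only [gammaBasis_gammaBasis_self, Finset.sum_const, Finset.card_univ, Fintype.card_fin]
    module
  have hreeb : ∑ s, gammaBasis s (∑ p, ((if xiIdx p = s then (1 : ℝ) else 0 : ℝ) : ℂ) • PhiOp p ψ) =
      ∑ p, gammaBasis (xiIdx p) (PhiOp p ψ) := by
    simp only [map_sum, map_smul]
    rw [Finset.sum_comm]
    simp
  simp only [map_add, map_smul, Finset.sum_add_distrib, ← Finset.smul_sum, hsq, hreeb, smul_smul,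
    mul_comm x]

/-- For all `α, δ ∈ ℝ` and `i ∈ {1,2,3}`:
`Σ_{s=1}^7 γ(e_s)[(α/2)γ(e_s)ψ_i + ((α-δ)/2) Σ_{p=1}^3 η_p(e_s)(Φ_p·ψ_i)]
  = -((2α+5δ)/2) ψ_i`,
i.e. each auxiliary spinor, viewed as an `𝓗`-Killing spinor in dimension 7, is
a Dirac eigenspinor with eigenvalue `-(2α+5δ)/2`. -/
theorem statement_16 (α δ : ℝ) (i : Fin 3) :
    ∑ s : Fin 7,
      gammaBasis s
        (((α / 2 : ℝ) : ℂ) • gammaBasis s (psiAux i)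
          + (((α - δ) / 2 : ℝ) : ℂ) •
              ∑ p : Fin 3,
                ((if xiIdx p = s then (1 : ℝ) else 0 : ℝ) : ℂ) • PhiOp p (psiAux i))
    = ((-((2 * α + 5 * δ) / 2) : ℝ) : ℂ) • psiAux i := by
  rw [sum_gammaBasis_killing, sum_gammaBasis_PhiOp_psiAux, smul_smul, ← add_smul]
  congr 1
  push_cast
  ring
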